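/- For the words s_k = (∏_{i=1}^{k-1} a^{N_i} b) a^{N_k} with N_i the value of the binary prefix w_k[1:k+i] of w_k = h(B[1:k]) (B a De Bruijn sequence of order ⌈log₂ k⌉ starting with 1, h(0)=01, h(1)=10), the start rule produced by RePair after k−1 rounds contains k pairwise non-overlapping factors v_1, …, v_k where v_i = f_{k−2}(w_k[i+2]) f_{k−3}(w_k[i+3]) ⋯ f_1(w_k[k+i−1]) f_0(w_k[k+i]), with f_0(1)=a, f_j(1)=X_j, f_j(0)=ε; each v_i has length ≥ (k−3)/2, no letter occurs twice in any v_i, and every word of length 2⌈log₂ k⌉ + 2 occurs at most once among the factors of the v_i's. -/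

import Mathlib

/-- Symbols appearing in RePair's grammars: nonterminals (numbered) or terminals. -/
abbrev RSym (α : Type) := ℕ ⊕ α

/-- A grammar in RePair's working representation: the list of right-hand sides, where the
rule at position `i` is the rule of nonterminal `i` and the start nonterminal is `0`. -/
abbrev Grammar (α : Type) := List (List (RSym α))

def countNOAux {σ : Type} [DecidableEq σ] (γ : List σ) : ℕ → List σ → ℕ
  | 0, _ => 0
  | fuel + 1, w =>
    if w = [] then 0
    else if γ <+: w then 1 + countNOAux γ fuel (w.drop γ.length)
    else countNOAux γ fuel w.tail

/-- The maximal number of pairwise non-overlapping occurrences of `γ` (with `|γ| ≥ 1`)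
in `w`, computed by the left-to-right greedy strategy. -/
def countNO {σ : Type} [DecidableEq σ] (γ w : List σ) : ℕ := countNOAux γ w.length w

def replaceNOAux {σ : Type} [DecidableEq σ] (γ : List σ) (X : σ) : ℕ → List σ → List σ
  | 0, w => w
  | _ + 1, [] => []
  | fuel + 1, s :: tl =>
    if γ <+: (s :: tl) then X :: replaceNOAux γ X fuel ((s :: tl).drop γ.length)
    else s :: replaceNOAux γ X fuel tl

/-- Replace the non-overlapping occurrences of `γ` in `w`, left to right, by `X`. -/
def replaceNO {σ : Type} [DecidableEq σ] (γ : List σ) (X : σ) (w : List σ) : List σ :=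
  replaceNOAux γ X w.length w

/-- The number of pairwise non-overlapping occurrences of `γ` in the right-hand sides. -/
def freq {α : Type} [DecidableEq α] (G : Grammar α) (γ : List (RSym α)) : ℕ :=
  (G.map (countNO γ)).sum

/-- `γ` is a maximal string of `G`: it has length at least two, occurs at least twice
without overlap, and no strictly longer word occurs at least as many times. -/
def IsMaxStr {α : Type} [DecidableEq α] (G : Grammar α) (γ : List (RSym α)) : Prop :=
  2 ≤ γ.length ∧ 2 ≤ freq G γ ∧ ∀ δ, γ.length < δ.length → freq G δ < freq G γ

/-- One round of RePair: pick a most frequent maximal string `γ`, replace its occurrences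
left to right by the fresh nonterminal `G.length`, and append the new rule `X → γ`. -/
def RePairStep {α : Type} [DecidableEq α] (G G' : Grammar α) : Prop :=
  ∃ γ, IsMaxStr G γ ∧ (∀ δ, IsMaxStr G δ → freq G δ ≤ freq G γ) ∧
    G' = (G.map (fun r => replaceNO γ (Sum.inl G.length) r)) ++ [γ]

/-- `RePairSteps r G G'`: `G'` is obtained from `G` by `r` rounds of RePair. -/
inductive RePairSteps {α : Type} [DecidableEq α] : ℕ → Grammar α → Grammar α → Prop
  | refl (G) : RePairSteps 0 G G
  | tail {n : ℕ} {G₁ G₂ G₃ : Grammar α} :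
      RePairSteps n G₁ G₂ → RePairStep G₂ G₃ → RePairSteps (n + 1) G₁ G₃

/-- The initial grammar `S → w`. -/
def RePairInit {α : Type} (w : List α) : Grammar α := [w.map Sum.inr]

/-- `G` is an output of RePair on input `w`: reachable from `S → w` by rounds of RePair,
with no maximal string left. -/
def RePairRun {α : Type} [DecidableEq α] (w : List α) (G : Grammar α) : Prop :=
  (∃ n, RePairSteps n (RePairInit w) G) ∧ ∀ γ, ¬ IsMaxStr G γ

/-- The size of a grammar: total length of all right-hand sides. -/
def gramSize {α : Type} (G : Grammar α) : ℕ := (G.map List.length).sum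

/-- The number of occurrences (starting positions) of `x` as a factor of `w`. -/
def countOcc {σ : Type} [DecidableEq σ] (x w : List σ) : ℕ :=
  ((List.range (w.length + 1)).filter (fun i => (w.drop i).take x.length = x)).length

/-- The homomorphism `h` with `h(0) = 01` and `h(1) = 10`, applied letter by letter
(`true` plays the role of `1`). -/
def hmap (u : List Bool) : List Bool :=
  u.flatMap (fun b => if b then [true, false] else [false, true])

/-- The value of a binary word (most significant bit first, `true` = 1). -/
def binVal (l : List Bool) : ℕ := l.foldl (fun acc b => 2 * acc + cond b 1 0) 0

/-- The word `a^{N 1} b a^{N 2} b ... b a^{N k}` over the alphabet `Fin 2`,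
with `a = 0` and `b = 1`. -/
def blockWord (N : ℕ → ℕ) (k : ℕ) : List (Fin 2) :=
  ((List.range (k - 1)).flatMap (fun j => List.replicate (N (j + 1)) 0 ++ [1])) ++
    List.replicate (N k) 0

section Occurrences

variable {σ : Type} [DecidableEq σ]

theorem countOcc_eq_card (x w : List σ) :
    countOcc x w =
      ((Finset.range (w.length + 1)).filter (fun i => (w.drop i).take x.length = x)).card := by
  rfl

theorem eq_of_countOcc_le_one {x w : List σ} (h : countOcc x w ≤ 1) {p q : ℕ}
    (hp : p ≤ w.length) (hq : q ≤ w.length) (hxp : (w.drop p).take x.length = x)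
    (hxq : (w.drop q).take x.length = x) : p = q := by
  rw [countOcc_eq_card, Finset.card_le_one] at h
  exact h p (by simp; exact ⟨by omega, hxp⟩) q (by simp; exact ⟨by omega, hxq⟩)

/-- If any two occurrences of `x` among the words `v i` coincide, there is at most one. -/
theorem sum_countOcc_le_one (s : Finset ℕ) (v : ℕ → List σ) (x : List σ)
    (h : ∀ i ∈ s, ∀ j ∈ s, ∀ p q, ((v i).drop p).take x.length = x →
      ((v j).drop q).take x.length = x → i = j ∧ p = q) :
    ∑ i ∈ s, countOcc x (v i) ≤ 1 := by
  simp only [countOcc_eq_card]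
  rw [← Finset.card_sigma, Finset.card_le_one]
  rintro ⟨i, p⟩ hi ⟨j, q⟩ hj
  simp only [Finset.mem_sigma, Finset.mem_filter] at hi hj
  obtain ⟨rfl, rfl⟩ := h i hi.1 j hj.1 p q hi.2.2 hj.2.2
  rfl

/-- Two equal windows of length `c` in a word without repeated factors of length `c`
start at the same position. -/
theorem eq_of_window_eq {B : List Bool} {c : ℕ}
    (hB : ∀ x : List Bool, x.length = c → countOcc x B ≤ 1) {p q : ℕ}
    (hp : p + c ≤ B.length) (hq : q + c ≤ B.length)
    (h : ∀ u < c, B.getD (p + u) false = B.getD (q + u) false) : p = q := by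
  have hlen : ((B.drop p).take c).length = c := by simp; omega
  refine eq_of_countOcc_le_one (hB _ hlen) (by omega) (by omega) (by rw [hlen]) ?_
  rw [hlen]
  apply List.ext_getElem
  · simp; omega
  · intro u h1 h2
    have hu : u < c := by omega
    have := h u hu
    rw [List.getD_eq_getElem _ _ (by omega), List.getD_eq_getElem _ _ (by omega)] at this
    simp [this]

theorem length_hmap (u : List Bool) : (hmap u).length = 2 * u.length := by
  induction u with
  | nil => rfl
  | cons b u ih =>
    have : hmap (b :: u) = (if b then [true, false] else [false, true]) ++ hmap u := rfl
    rw [this]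
    cases b <;> simp [ih] <;> ring

theorem getD_hmap (u : List Bool) (t : ℕ) (ht : t < u.length) :
    (hmap u).getD (2 * t) false = u.getD t false ∧
      (hmap u).getD (2 * t + 1) false = !u.getD t false := by
  induction u generalizing t with
  | nil => simp at ht
  | cons b u ih =>
    have hb : hmap (b :: u) = b :: (!b) :: hmap u := by cases b <;> rfl
    rw [hb]
    cases t with
    | zero => simp
    | succ t =>
      have := ih t (by simpa using ht)
      simpa [Nat.mul_add] using this

/-- A window of length `2 * c + 2` of `h(B[1:k])` determines its position. -/
theorem hmap_window_unique {B : List Bool} {c k : ℕ} (hk : k ≤ B.length)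
    (hB : ∀ x : List Bool, x.length = c → countOcc x B ≤ 1) {p q : ℕ}
    (hp : p + 2 * c + 2 ≤ 2 * k) (hq : q + 2 * c + 2 ≤ 2 * k)
    (h : ∀ u < 2 * c + 2, (hmap (B.take k)).getD (p + u) false =
      (hmap (B.take k)).getD (q + u) false) : p = q := by
  set g : ℕ → Bool := fun n => (hmap (B.take k)).getD n false with hg
  have hlen : (B.take k).length = k := by simp [hk]
  have hBt : ∀ t < k, (B.take k).getD t false = B.getD t false := by
    intro t ht
    simp [List.getD, ht]
  have h0 : ∀ t n, n = 2 * t → t < k → g n = B.getD t false := by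
    rintro t n rfl ht
    rw [← hBt t ht]
    exact (getD_hmap _ t (by omega)).1
  have h1 : ∀ t n, n = 2 * t + 1 → t < k → g n = !B.getD t false := by
    rintro t n rfl ht
    rw [← hBt t ht]
    exact (getD_hmap _ t (by omega)).2
  have mixed : ∀ a b : ℕ, 2 * a + 2 * c + 2 ≤ 2 * k → 2 * b + 1 + 2 * c + 2 ≤ 2 * k →
      (∀ u < 2 * c + 2, g (2 * a + u) = g (2 * b + 1 + u)) → False := by
    intro a b ha hb hab
    have key : ∀ u < c, B.getD (b + u) false = B.getD (b + 1 + u) false := by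
      intro u hu
      have e1 := hab (2 * u) (by omega)
      have e2 := hab (2 * u + 1) (by omega)
      rw [h0 (a + u) _ (by ring) (by omega), h1 (b + u) _ (by ring) (by omega)] at e1
      rw [h1 (a + u) _ (by ring) (by omega), h0 (b + 1 + u) _ (by ring) (by omega)] at e2
      rw [← e2, e1, Bool.not_not]
    have := eq_of_window_eq hB (by omega) (by omega) key
    omega
  rcases Nat.even_or_odd' p with ⟨a, rfl | rfl⟩ <;> rcases Nat.even_or_odd' q with ⟨b, rfl | rfl⟩
  · have : a = b := by
      refine eq_of_window_eq hB (by omega) (by omega) fun u hu => ?_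
      have e := h (2 * u) (by omega)
      change g _ = g _ at e
      rwa [h0 (a + u) _ (by ring) (by omega), h0 (b + u) _ (by ring) (by omega)] at e
    rw [this]
  · exact (mixed a b (by omega) (by omega) h).elim
  · exact (mixed b a (by omega) (by omega) fun u hu => (h u hu).symm).elim
  · have : a = b := by
      refine eq_of_window_eq hB (by omega) (by omega) fun u hu => ?_
      have e := h (2 * u) (by omega)
      change g _ = g _ at e
      rw [h1 (a + u) _ (by ring) (by omega), h1 (b + u) _ (by ring) (by omega)] at e
      simpa using e
    rw [this]

end Occurrences

section DescendingWords

theorem isInfix_take_drop {α : Type} (l : List α) (p m : ℕ) : (l.drop p).take m <:+: l :=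
  ⟨l.take p, (l.drop p).drop m, by
    rw [List.append_assoc, List.take_append_drop, List.take_append_drop]⟩

/-- The indices below `n` that satisfy `P`, in decreasing order. -/
def descFilter (n : ℕ) (P : ℕ → Bool) : List ℕ := (List.range n).reverse.filter P

theorem mem_descFilter {n : ℕ} {P : ℕ → Bool} {t : ℕ} :
    t ∈ descFilter n P ↔ t < n ∧ P t = true := by
  simp [descFilter]

theorem pairwise_descFilter (n : ℕ) (P : ℕ → Bool) : (descFilter n P).Pairwise (· > ·) := by
  apply List.Pairwise.filter
  rw [List.pairwise_reverse]
  exact List.pairwise_lt_range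

theorem nodup_descFilter (n : ℕ) (P : ℕ → Bool) : (descFilter n P).Nodup :=
  (pairwise_descFilter n P).imp ne_of_gt

theorem descFilter_succ (n : ℕ) (P : ℕ → Bool) :
    descFilter (n + 1) P = (if P n then [n] else []) ++ descFilter n P := by
  unfold descFilter
  rw [List.range_succ, List.reverse_append, List.filter_append]
  cases h : P n <;> simp [h]

/-- A factor of `descFilter n P` determines `P` between its last and its first letter. -/
theorem mem_infix_descFilter {n : ℕ} {P : ℕ → Bool} {y : List ℕ} (hy : y <:+: descFilter n P)
    (hne : y ≠ []) {t : ℕ} (h1 : y.getLast hne ≤ t) (h2 : t ≤ y.head hne) :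
    t ∈ y ↔ P t = true := by
  have hhead : y.head hne < n := (mem_descFilter.1 (hy.subset (List.head_mem hne))).1
  refine ⟨fun ht => (mem_descFilter.1 (hy.subset ht)).2, fun ht => ?_⟩
  have hmem : t ∈ descFilter n P := mem_descFilter.2 ⟨by omega, ht⟩
  obtain ⟨a, b, hab⟩ := hy
  have hpw := pairwise_descFilter n P
  rw [← hab] at hmem hpw
  rw [List.pairwise_append, List.pairwise_append] at hpw
  obtain ⟨⟨-, -, hay⟩, -, hayb⟩ := hpw
  rw [List.mem_append, List.mem_append] at hmem
  rcases hmem with (h | h) | h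
  · have := hay t h _ (List.head_mem hne)
    omega
  · exact h
  · have := hayb _ (List.mem_append_right a (List.getLast_mem hne)) t h
    omega

theorem length_add_getLast_le {y : List ℕ} (hpw : y.Pairwise (· > ·)) (hne : y ≠ []) :
    y.length + y.getLast hne ≤ y.head hne + 1 := by
  induction y with
  | nil => exact absurd rfl hne
  | cons a y ih =>
    cases y with
    | nil => simp; omega
    | cons b y =>
      rw [List.pairwise_cons] at hpw
      have h1 := ih hpw.2 (by simp)
      have h2 := hpw.1 b (by simp)
      rw [List.getLast_cons (by simp)]
      simp only [List.length_cons, List.head_cons] at h1 ⊢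
      omega

/-- A common factor of two filtered descending ranges is a window of agreement. -/
theorem exists_agree_of_common_factor {n m : ℕ} {P Q : ℕ → Bool} {y : List ℕ}
    (hP : y <:+: descFilter n P) (hQ : y <:+: descFilter n Q) (hm : y.length = m + 1) :
    ∃ s, s + m < n ∧ ∀ u ≤ m, P (s + u) = Q (s + u) := by
  have hne : y ≠ [] := by rintro rfl; simp at hm
  have hlen := length_add_getLast_le ((pairwise_descFilter n P).sublist hP.sublist) hne
  have hhead : y.head hne < n := (mem_descFilter.1 (hP.subset (List.head_mem hne))).1
  refine ⟨y.getLast hne, by omega, fun u hu => ?_⟩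
  rw [Bool.eq_iff_iff, ← mem_infix_descFilter hP hne (by omega) (by omega),
    ← mem_infix_descFilter hQ hne (by omega) (by omega)]

end DescendingWords

section PairCounts

/-- A window of `m` letters of a word made of pairs `01` and `10` contains nearly `m / 2` ones. -/
theorem le_two_mul_length_filter (g : ℕ → Bool) (K : ℕ)
    (hg : ∀ t < K, g (2 * t + 1) = !g (2 * t)) (m p : ℕ) (hm : p + m ≤ 2 * K) :
    m ≤ 2 * ((List.range m).filter (fun j => g (p + j))).length + 1 + p % 2 := by
  induction m using Nat.strong_induction_on generalizing p with
  | _ m ih =>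
    rcases m with _ | _ | m
    · omega
    · omega
    · have hstep : ∀ q n, ((List.range (n + 1)).filter (fun j => g (q + j))).length =
          (if g q then 1 else 0) + ((List.range n).filter (fun j => g (q + 1 + j))).length := by
        intro q n
        rw [List.range_succ_eq_map, List.filter_cons, List.filter_map]
        have : ((fun j => g (q + j)) ∘ Nat.succ) = fun j => g (q + 1 + j) := by
          funext j
          simp only [Function.comp, Nat.succ_eq_add_one]
          congr 1; ring
        rw [this]
        cases g q <;> simp [add_comm]
      rcases Nat.even_or_odd' p with ⟨a, rfl | rfl⟩
      · have h2 := ih m (by omega) (2 * a + 2) (by omega)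
        rw [hstep, hstep, hg a (by omega), show 2 * a + 1 + 1 = 2 * a + 2 from rfl]
        cases g (2 * a) <;> simp at h2 ⊢ <;> omega
      · have h2 := ih (m + 1) (by omega) (2 * a + 2) (by omega)
        rw [hstep]
        simp only [show 2 * a + 1 + 1 = 2 * a + 2 from rfl]
        omega

end PairCounts

section GreedyFactors

variable {σ : Type} [DecidableEq σ]

theorem countNOAux_mul_count_le [BEq σ] [LawfulBEq σ] (γ : List σ) (c : σ) (n : ℕ) (w : List σ) :
    countNOAux γ n w * γ.count c ≤ w.count c := by
  induction n generalizing w with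
  | zero => simp [countNOAux]
  | succ n ih =>
    rw [countNOAux]
    split_ifs with h1 h2
    · simp
    · obtain ⟨t, rfl⟩ := h2
      have := ih t
      rw [List.drop_left, List.count_append, Nat.add_mul]
      omega
    · exact (ih _).trans ((List.tail_sublist w).count_le c)

theorem countNO_mul_count_le [BEq σ] [LawfulBEq σ] (γ w : List σ) (c : σ) :
    countNO γ w * γ.count c ≤ w.count c :=
  countNOAux_mul_count_le γ c _ w

theorem countNOAux_mul_length_le (γ : List σ) (n : ℕ) (w : List σ) :
    countNOAux γ n w * γ.length ≤ w.length := by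
  induction n generalizing w with
  | zero => simp [countNOAux]
  | succ n ih =>
    rw [countNOAux]
    split_ifs with h1 h2
    · simp
    · obtain ⟨t, rfl⟩ := h2
      have := ih t
      rw [List.drop_left, List.length_append, Nat.add_mul]
      omega
    · exact (ih _).trans (List.tail_sublist w).length_le

theorem countNO_mul_length_le (γ w : List σ) : countNO γ w * γ.length ≤ w.length :=
  countNOAux_mul_length_le γ _ w

theorem countNOAux_congr (X Z : σ) (n m : ℕ) (w : List σ) (hn : w.length ≤ n)
    (hm : w.length ≤ m) : countNOAux [X, Z] n w = countNOAux [X, Z] m w := by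
  induction n generalizing w m with
  | zero =>
    obtain rfl : w = [] := List.length_eq_zero_iff.1 (by omega)
    cases m <;> simp [countNOAux]
  | succ n ih =>
    cases m with
    | zero =>
      obtain rfl : w = [] := List.length_eq_zero_iff.1 (by omega)
      simp [countNOAux]
    | succ m =>
      rw [countNOAux, countNOAux, ih m (w.drop _) (by simp; omega) (by simp; omega),
        ih m w.tail (by simp; omega) (by simp; omega)]

theorem replaceNOAux_congr (X Z Y : σ) (n m : ℕ) (w : List σ) (hn : w.length ≤ n)
    (hm : w.length ≤ m) : replaceNOAux [X, Z] Y n w = replaceNOAux [X, Z] Y m w := by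
  induction n generalizing w m with
  | zero =>
    obtain rfl : w = [] := List.length_eq_zero_iff.1 (by omega)
    cases m <;> simp [replaceNOAux]
  | succ n ih =>
    cases w with
    | nil => cases m <;> simp [replaceNOAux]
    | cons s t =>
      cases m with
      | zero => simp at hm
      | succ m =>
        simp only [List.length_cons] at hn hm
        rw [replaceNOAux, replaceNOAux, ih m t (by omega) (by omega),
          ih m ((s :: t).drop _) (by simp; omega) (by simp; omega)]

theorem countNO_nil (γ : List σ) : countNO γ [] = 0 := rfl

theorem countNO_pair_cons_cons (X : σ) (t : List σ) :
    countNO [X, X] (X :: X :: t) = 1 + countNO [X, X] t := by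
  unfold countNO
  rw [List.length_cons, countNOAux]
  simp [countNOAux_congr X X (t.length + 1) t.length t (by omega) le_rfl]

theorem countNO_pair_cons (X s : σ) (t : List σ) (h : ¬ [X, X] <+: s :: t) :
    countNO [X, X] (s :: t) = countNO [X, X] t := by
  unfold countNO
  rw [List.length_cons, countNOAux]
  simp [h]

theorem replaceNO_nil (γ : List σ) (Y : σ) : replaceNO γ Y [] = [] := rfl

theorem replaceNO_pair_cons_cons (X Y : σ) (t : List σ) :
    replaceNO [X, X] Y (X :: X :: t) = Y :: replaceNO [X, X] Y t := by
  unfold replaceNO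
  rw [List.length_cons, replaceNOAux]
  simp [replaceNOAux_congr X X Y (t.length + 1) t.length t (by omega) le_rfl]

theorem replaceNO_pair_cons (X Y s : σ) (t : List σ) (h : ¬ [X, X] <+: s :: t) :
    replaceNO [X, X] Y (s :: t) = s :: replaceNO [X, X] Y t := by
  unfold replaceNO
  rw [List.length_cons, replaceNOAux]
  simp [h]

theorem not_pair_prefix_cons {τ : Type} {X s : τ} (t : List τ) (h : s ≠ X) : ¬ [X, X] <+: s :: t := by
  rintro ⟨_, h'⟩
  simp at h'
  exact h h'.1.symm

theorem countNO_pair_append_of_notMem (X : σ) (u t : List σ) (hu : X ∉ u) :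
    countNO [X, X] (u ++ t) = countNO [X, X] t := by
  induction u with
  | nil => rfl
  | cons s u ih =>
    simp only [List.mem_cons, not_or] at hu
    rw [← ih hu.2]
    exact countNO_pair_cons X s _ (not_pair_prefix_cons _ (Ne.symm hu.1))

/-- Greedy counting of `XX` in a power of `X` followed by an `X`-free word. -/
theorem countNO_pair_block (X : σ) (q : ℕ) (u t : List σ) (hu : X ∉ u) (hut : u ≠ [] ∨ t = []) :
    countNO [X, X] (List.replicate q X ++ (u ++ t)) = q / 2 + countNO [X, X] t := by
  induction q using Nat.twoStepInduction with
  | zero => simpa using countNO_pair_append_of_notMem X u t hu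
  | one =>
    have hX : ¬ [X, X] <+: X :: (u ++ t) := by
      rintro ⟨z, hz⟩
      cases u with
      | nil => simp_all
      | cons s u => simp_all
    simpa [countNO_pair_append_of_notMem X u t hu] using countNO_pair_cons X X _ hX
  | more q ih _ =>
    rw [List.replicate_succ, List.replicate_succ, List.cons_append, List.cons_append,
      countNO_pair_cons_cons, ih]
    omega

theorem replaceNO_pair_append_of_notMem (X Y : σ) (u t : List σ) (hu : X ∉ u) :
    replaceNO [X, X] Y (u ++ t) = u ++ replaceNO [X, X] Y t := by
  induction u with
  | nil => rfl
  | cons s u ih =>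
    simp only [List.mem_cons, not_or] at hu
    rw [List.cons_append, List.cons_append, ← ih hu.2]
    exact replaceNO_pair_cons X Y s _ (not_pair_prefix_cons _ (Ne.symm hu.1))

/-- Greedy replacement of `XX` in a power of `X` followed by an `X`-free word. -/
theorem replaceNO_pair_block (X Y : σ) (q : ℕ) (u t : List σ) (hu : X ∉ u)
    (hut : u ≠ [] ∨ t = []) :
    replaceNO [X, X] Y (List.replicate q X ++ (u ++ t)) =
      List.replicate (q / 2) Y ++ (List.replicate (q % 2) X ++ (u ++ replaceNO [X, X] Y t)) := by
  induction q using Nat.twoStepInduction with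
  | zero => simpa using replaceNO_pair_append_of_notMem X Y u t hu
  | one =>
    have hX : ¬ [X, X] <+: X :: (u ++ t) := by
      rintro ⟨z, hz⟩
      cases u with
      | nil => simp_all
      | cons s u => simp_all
    have := replaceNO_pair_cons X Y X _ hX
    rw [replaceNO_pair_append_of_notMem X Y u t hu] at this
    simpa using this
  | more q ih _ =>
    rw [List.replicate_succ, List.replicate_succ, List.cons_append, List.cons_append,
      replaceNO_pair_cons_cons, ih, show (q + 2) / 2 = q / 2 + 1 by omega,
      show (q + 2) % 2 = q % 2 by omega, List.replicate_succ, List.cons_append]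

end GreedyFactors

section RePairRounds

instance {α β : Type} [BEq α] [LawfulBEq α] [BEq β] [LawfulBEq β] : LawfulBEq (α ⊕ β) where
  rfl := by
    rintro (a | b)
    · exact beq_self_eq_true a
    · exact beq_self_eq_true b
  eq_of_beq := by
    rintro (a | b) (a' | b') h
    · exact congrArg _ (eq_of_beq (a := a) h)
    · exact absurd h Bool.false_ne_true
    · exact absurd h Bool.false_ne_true
    · exact congrArg _ (eq_of_beq (a := b) h)

/-- The symbol `X j`, where `X 0 = a`. -/
def powSym (j : ℕ) : RSym (Fin 2) := if j = 0 then Sum.inr 0 else Sum.inl j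

theorem powSym_injective : Function.Injective powSym := by
  intro i j h
  unfold powSym at h
  split_ifs at h <;> simp_all

theorem powSym_ne_sep (j : ℕ) : powSym j ≠ Sum.inr 1 := by
  unfold powSym
  split_ifs <;> simp

/-- The encoding of the `r` least significant bits of `n`. -/
def lowWord (r n : ℕ) : List (RSym (Fin 2)) := (descFilter r n.testBit).map powSym

theorem lowWord_succ (r n : ℕ) :
    lowWord (r + 1) n = List.replicate (n / 2 ^ r % 2) (powSym r) ++ lowWord r n := by
  unfold lowWord
  rw [descFilter_succ, List.map_append]
  congr 1
  rw [Nat.testBit_eq_decide_div_mod_eq]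
  rcases Nat.mod_two_eq_zero_or_one (n / 2 ^ r) with h | h <;> simp [h]

theorem nodup_lowWord (r n : ℕ) : (lowWord r n).Nodup :=
  (nodup_descFilter _ _).map powSym_injective

theorem powSym_notMem_lowWord (r n : ℕ) : powSym r ∉ lowWord r n := by
  simp only [lowWord, List.mem_map, not_exists, not_and, mem_descFilter]
  intro j hj h
  have := powSym_injective h
  omega

theorem sep_notMem_lowWord (r n : ℕ) : (Sum.inr 1 : RSym (Fin 2)) ∉ lowWord r n := by
  simp only [lowWord, List.mem_map, not_exists, not_and]
  exact fun j _ => powSym_ne_sep j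

/-- The start rule after `r` rounds for the blocks `a^{M 0}, …, a^{M l}`. -/
def startRule (r : ℕ) : (ℕ → ℕ) → ℕ → List (RSym (Fin 2))
  | M, 0 => List.replicate (M 0 / 2 ^ r) (powSym r) ++ (lowWord r (M 0) ++ [])
  | M, l + 1 => List.replicate (M 0 / 2 ^ r) (powSym r) ++
      ((lowWord r (M 0) ++ [Sum.inr 1]) ++ startRule r (fun i => M (i + 1)) l)

theorem powSym_notMem_lowWord_append_sep (r n : ℕ) :
    powSym r ∉ lowWord r n ++ [(Sum.inr 1 : RSym (Fin 2))] := by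
  simp only [List.mem_append, List.mem_singleton, not_or]
  exact ⟨powSym_notMem_lowWord r n, powSym_ne_sep r⟩

theorem replaceNO_startRule (r : ℕ) (M : ℕ → ℕ) (l : ℕ) :
    replaceNO [powSym r, powSym r] (powSym (r + 1)) (startRule r M l) =
      startRule (r + 1) M l := by
  have hdiv : ∀ n, n / 2 ^ r / 2 = n / 2 ^ (r + 1) := fun n => by
    rw [Nat.div_div_eq_div_mul, pow_succ]
  induction l generalizing M with
  | zero =>
    rw [startRule, startRule,
      replaceNO_pair_block _ _ _ _ _ (powSym_notMem_lowWord r _) (Or.inr rfl), replaceNO_nil,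
      hdiv, lowWord_succ, List.append_assoc]
  | succ l ih =>
    rw [startRule, startRule, replaceNO_pair_block _ _ _ _ _
      (powSym_notMem_lowWord_append_sep r _) (Or.inl (by simp)), ih, hdiv, lowWord_succ]
    simp only [List.append_assoc]

theorem le_countNO_startRule (r : ℕ) (M : ℕ → ℕ) (l : ℕ) (hM : ∀ i ≤ l, 4 ≤ M i / 2 ^ r) :
    2 * (l + 1) ≤ countNO [powSym r, powSym r] (startRule r M l) ∧
      (startRule r M l).count (powSym r) <
        3 * countNO [powSym r, powSym r] (startRule r M l) := by
  induction l generalizing M with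
  | zero =>
    have h0 := hM 0 le_rfl
    rw [startRule, countNO_pair_block _ _ _ _ (powSym_notMem_lowWord r _) (Or.inr rfl),
      countNO_nil]
    simp only [List.append_nil, List.count_append, List.count_replicate_self,
      List.count_eq_zero_of_not_mem (powSym_notMem_lowWord r _)]
    omega
  | succ l ih =>
    have h0 := hM 0 (by omega)
    have h1 := ih (fun i => M (i + 1)) (fun i hi => hM (i + 1) (by omega))
    have hu := powSym_notMem_lowWord_append_sep r (M 0)
    rw [startRule, countNO_pair_block _ _ _ _ hu (Or.inl (by simp)), List.count_append,
      List.count_append, List.count_replicate_self, List.count_eq_zero_of_not_mem hu]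
    omega

theorem count_startRule_le (r : ℕ) (M : ℕ → ℕ) (l : ℕ) {c : RSym (Fin 2)} (hc : c ≠ powSym r) :
    (startRule r M l).count c ≤ l + 1 := by
  have hrep : ∀ q, (List.replicate q (powSym r)).count c = 0 := fun q =>
    List.count_eq_zero_of_not_mem fun h => hc (List.eq_of_mem_replicate h)
  induction l generalizing M with
  | zero =>
    have := List.nodup_iff_count_le_one.1 (nodup_lowWord r (M 0)) c
    simpa only [startRule, List.append_nil, List.count_append, hrep, zero_add] using this
  | succ l ih =>
    have hnd : (lowWord r (M 0) ++ [(Sum.inr 1 : RSym (Fin 2))]).Nodup := by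
      rw [← List.concat_eq_append, List.nodup_concat]
      exact ⟨sep_notMem_lowWord r _, nodup_lowWord r _⟩
    have h1 := List.nodup_iff_count_le_one.1 hnd c
    have h2 := ih (fun i => M (i + 1))
    rw [startRule, List.count_append, List.count_append, hrep]
    omega

/-- The grammar after `r` rounds for the blocks `a^{M 0}, …, a^{M l}`. -/
def roundGrammar (r : ℕ) (M : ℕ → ℕ) (l : ℕ) : Grammar (Fin 2) :=
  startRule r M l :: (List.range r).map (fun j => [powSym j, powSym j])

theorem freq_roundGrammar (r : ℕ) (M : ℕ → ℕ) (l : ℕ) (γ : List (RSym (Fin 2))) :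
    freq (roundGrammar r M l) γ = countNO γ (startRule r M l) +
      ((List.range r).map (fun j => countNO γ [powSym j, powSym j])).sum := by
  simp [freq, roundGrammar, Function.comp_def]

/-- The pair `X r X r` is strictly more frequent than any other word of length at least two. -/
theorem freq_lt_freq_pair (r : ℕ) (M : ℕ → ℕ) (l : ℕ) (hr : r ≤ l)
    (hM : ∀ i ≤ l, 4 ≤ M i / 2 ^ r) (γ : List (RSym (Fin 2))) (hγ : 2 ≤ γ.length)
    (hne : γ ≠ [powSym r, powSym r]) :
    freq (roundGrammar r M l) γ < freq (roundGrammar r M l) [powSym r, powSym r] := by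
  obtain ⟨h1, h2⟩ := le_countNO_startRule r M l hM
  rw [freq_roundGrammar, freq_roundGrammar]
  refine lt_of_lt_of_le ?_ (Nat.le_add_right _ _)
  by_cases hall : ∃ c ∈ γ, c ≠ powSym r
  · obtain ⟨c, hcγ, hc⟩ := hall
    have h3 := countNO_mul_count_le γ (startRule r M l) c
    have h4 := count_startRule_le r M l hc
    have h5 : 1 ≤ γ.count c := List.one_le_count_iff.2 hcγ
    have h6 : countNO γ (startRule r M l) ≤ l + 1 := by nlinarith
    have h7 : ((List.range r).map (fun j => countNO γ [powSym j, powSym j])).sum ≤ r := by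
      have := List.sum_le_card_nsmul
        ((List.range r).map (fun j => countNO γ [powSym j, powSym j])) 1 (by
          intro x hx
          obtain ⟨j, -, rfl⟩ := List.mem_map.1 hx
          have := countNO_mul_length_le γ [powSym j, powSym j]
          simp only [List.length_cons, List.length_nil] at this
          nlinarith)
      simpa using this
    omega
  · push Not at hall
    have hcount : γ.count (powSym r) = γ.length :=
      List.count_eq_length.2 fun c hc => (hall c hc).symm
    have hlen : 3 ≤ γ.length := by
      by_contra hlt
      apply hne
      have : γ = List.replicate γ.length (powSym r) := List.eq_replicate_of_mem hall
      rw [this, show γ.length = 2 by omega]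
      rfl
    have h3 := countNO_mul_count_le γ (startRule r M l) (powSym r)
    have h4 : ((List.range r).map (fun j => countNO γ [powSym j, powSym j])).sum = 0 := by
      rw [List.sum_eq_zero_iff]
      intro x hx
      obtain ⟨j, hj, rfl⟩ := List.mem_map.1 hx
      have hjr : j ≠ r := by have := List.mem_range.1 hj; omega
      have h5 := countNO_mul_count_le γ [powSym j, powSym j] (powSym r)
      have h6 : powSym r ∉ [powSym j, powSym j] := by
        simp [powSym_injective.eq_iff, hjr.symm]
      rw [List.count_eq_zero_of_not_mem h6, hcount] at h5
      nlinarith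
    rw [hcount] at h3
    rw [h4]
    nlinarith

theorem eq_roundGrammar_succ_of_step {r : ℕ} {M : ℕ → ℕ} {l : ℕ} (hr : r ≤ l)
    (hM : ∀ i ≤ l, 4 ≤ M i / 2 ^ r) {G : Grammar (Fin 2)}
    (h : RePairStep (roundGrammar r M l) G) : G = roundGrammar (r + 1) M l := by
  obtain ⟨γ, ⟨hγlen, -, -⟩, hbest, rfl⟩ := h
  have hlt := freq_lt_freq_pair r M l hr hM
  have hmax : IsMaxStr (roundGrammar r M l) [powSym r, powSym r] := by
    refine ⟨le_rfl, ?_, fun δ hδ => hlt δ hδ.le ?_⟩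
    · have := (le_countNO_startRule r M l hM).1
      rw [freq_roundGrammar]
      omega
    · rintro rfl
      exact lt_irrefl _ hδ
  obtain rfl : γ = [powSym r, powSym r] := by
    by_contra hne
    exact absurd (hbest _ hmax) (not_le.2 (hlt γ hγlen hne))
  have hlen : (Sum.inl (roundGrammar r M l).length : RSym (Fin 2)) = powSym (r + 1) := by
    simp [roundGrammar, powSym]
  rw [hlen]
  simp only [roundGrammar, List.map_cons, replaceNO_startRule, List.range_succ, List.map_append,
    List.map_nil, List.cons_append, List.map_map, List.cons.injEq, true_and]
  congr 1
  apply List.map_congr_left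
  intro j hj
  have hjr : j ≠ r := by have := List.mem_range.1 hj; omega
  have := replaceNO_pair_append_of_notMem (powSym r) (powSym (r + 1)) [powSym j, powSym j] []
    (by simp [powSym_injective.eq_iff, hjr.symm])
  simpa [replaceNO_nil] using this

theorem eq_roundGrammar_of_steps {M : ℕ → ℕ} {l r : ℕ} (hr : r ≤ l)
    (hM : ∀ i ≤ l, 2 ^ (l + 1) ≤ M i) {G : Grammar (Fin 2)}
    (h : RePairSteps r (roundGrammar 0 M l) G) : G = roundGrammar r M l := by
  induction r generalizing G with
  | zero => cases h; rfl
  | succ r ih =>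
    cases h with
    | tail h1 h2 =>
      obtain rfl := ih (by omega) h1
      refine eq_roundGrammar_succ_of_step (by omega) (fun i hi => ?_) h2
      rw [Nat.le_div_iff_mul_le (by positivity)]
      calc 4 * 2 ^ r = 2 ^ (r + 2) := by ring
        _ ≤ 2 ^ (l + 1) := Nat.pow_le_pow_right (by norm_num) (by omega)
        _ ≤ M i := hM i hi

theorem repairInit_blockWord (N : ℕ → ℕ) (l : ℕ) :
    RePairInit (blockWord N (l + 1)) = roundGrammar 0 (fun i => N (i + 1)) l := by
  simp only [RePairInit, roundGrammar, List.range_zero, List.map_nil, List.cons.injEq, and_true]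
  induction l generalizing N with
  | zero => simp [blockWord, startRule, powSym, lowWord, descFilter]
  | succ l ih =>
    have h := ih (fun i => N (i + 1))
    simp only [blockWord, Nat.add_sub_cancel] at h ⊢
    rw [List.range_succ_eq_map, List.flatMap_cons, List.flatMap_map, startRule, ← h]
    simp [powSym, lowWord, descFilter]

/-- The low-order words are non-overlapping factors of the start rule. -/
theorem exists_positions_startRule (r : ℕ) (M : ℕ → ℕ) (l : ℕ) :
    ∃ pos : ℕ → ℕ,
      (∀ i ≤ l, ((startRule r M l).drop (pos i)).take (lowWord r (M i)).length =
        lowWord r (M i)) ∧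
      ∀ i j, i < j → j ≤ l → pos i + (lowWord r (M i)).length ≤ pos j := by
  induction l generalizing M with
  | zero =>
    refine ⟨fun _ => M 0 / 2 ^ r, ?_, by omega⟩
    intro i hi
    obtain rfl : i = 0 := by omega
    simp [startRule]
  | succ l ih =>
    obtain ⟨pos, h1, h2⟩ := ih (fun i => M (i + 1))
    refine ⟨fun i => match i with
      | 0 => M 0 / 2 ^ r
      | i + 1 => (M 0 / 2 ^ r + ((lowWord r (M 0)).length + 1)) + pos i, ?_, ?_⟩
    · intro i hi
      cases i with
      | zero => simp [startRule]
      | succ i =>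
        have hl : startRule r M (l + 1) = (List.replicate (M 0 / 2 ^ r) (powSym r) ++
            (lowWord r (M 0) ++ [Sum.inr 1])) ++ startRule r (fun i => M (i + 1)) l := by
          simp [startRule]
        have hlen : (List.replicate (M 0 / 2 ^ r) (powSym r) ++
            (lowWord r (M 0) ++ [Sum.inr 1])).length =
              M 0 / 2 ^ r + ((lowWord r (M 0)).length + 1) := by simp
        rw [hl]
        simp only
        rw [← hlen, ← List.drop_drop, List.drop_left]
        exact h1 i (by omega)
    · intro i j hij hj
      cases j with
      | zero => omega
      | succ j =>
        cases i with
        | zero => simp only; omega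
        | succ i =>
          have := h2 i j (by omega) (by omega)
          simp only
          omega

end RePairRounds

section BinaryPrefixes

theorem binVal_append_singleton (l : List Bool) (b : Bool) :
    binVal (l ++ [b]) = 2 * binVal l + cond b 1 0 := by
  simp [binVal]

theorem testBit_binVal (l : List Bool) (t : ℕ) (ht : t < l.length) :
    (binVal l).testBit t = l.getD (l.length - 1 - t) false := by
  induction l using List.reverseRecOn generalizing t with
  | nil => simp at ht
  | append_singleton l b ih =>
    rw [binVal_append_singleton]
    cases t with
    | zero =>
      cases b <;> simp [Nat.testBit_zero]
    | succ t =>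
      have ht' : t < l.length := by simpa using ht
      have hd : (2 * binVal l + cond b 1 0) / 2 = binVal l := by
        cases b
        · simp
        · simp; omega
      rw [Nat.testBit_succ, hd, ih t ht', List.getD_append _ _ _ _ (by simp; omega)]
      congr 1
      simp
      omega

theorem two_pow_le_binVal (l : List Bool) (h : l.headI = true) :
    2 ^ l.length ≤ 2 * binVal l := by
  induction l using List.reverseRecOn with
  | nil => simp at h
  | append_singleton l b ih =>
    rw [binVal_append_singleton]
    cases l with
    | nil =>
      obtain rfl : b = true := by simpa using h
      simp [binVal]
    | cons c l =>
      have := ih (by simpa using h)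
      rw [List.length_append, List.length_singleton, pow_succ]
      omega

/-- The factor `v i = f (k-2) (w[i+2]) ⋯ f 0 (w[k+i])`. -/
def factorWord (w : List Bool) (k i : ℕ) : List (RSym (Fin 2)) :=
  (List.range (k - 1)).flatMap (fun j =>
    if w.getD (i + 1 + j) false then
      [if k - 2 - j = 0 then (Sum.inr 0 : RSym (Fin 2)) else Sum.inl (k - 2 - j)]
    else [])

theorem flatMap_ite_singleton {α β : Type} (l : List α) (p : α → Bool) (f : α → β) :
    l.flatMap (fun j => if p j then [f j] else []) = (l.filter p).map f := by
  induction l with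
  | nil => rfl
  | cons a l ih =>
    rw [List.flatMap_cons, ih, List.filter_cons]
    cases p a <;> simp

theorem factorWord_eq_map_filter (w : List Bool) (k i : ℕ) :
    factorWord w k i = ((List.range (k - 1)).filter (fun j => w.getD (i + 1 + j) false)).map
      (fun j => powSym (k - 2 - j)) :=
  flatMap_ite_singleton _ _ _

theorem factorWord_eq (w : List Bool) (k i : ℕ) :
    factorWord w k i =
      (descFilter (k - 1) (fun t => w.getD (k + i - 1 - t) false)).map powSym := by
  have hrev : (List.range (k - 1)).reverse = (List.range (k - 1)).map (fun j => k - 2 - j) := by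
    apply List.ext_getElem
    · simp
    · intro n h1 h2
      simp
      omega
  rw [factorWord_eq_map_filter, descFilter, hrev, List.filter_map, List.map_map]
  have : (List.range (k - 1)).filter (fun j => w.getD (i + 1 + j) false) =
      (List.range (k - 1)).filter
        ((fun t => w.getD (k + i - 1 - t) false) ∘ fun j => k - 2 - j) := by
    apply List.filter_congr
    intro j hj
    have := List.mem_range.1 hj
    simp only [Function.comp]
    congr 1
    omega
  rw [this]
  rfl

theorem nodup_factorWord (w : List Bool) (k i : ℕ) : (factorWord w k i).Nodup := by
  rw [factorWord_eq]
  exact (nodup_descFilter _ _).map powSym_injective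

theorem factorWord_eq_lowWord (w : List Bool) (k i : ℕ) (h : k + i ≤ w.length) :
    factorWord w k i = lowWord (k - 1) (binVal (w.take (k + i))) := by
  rw [factorWord_eq, lowWord, descFilter, descFilter]
  congr 1
  apply List.filter_congr
  intro t ht
  have ht' : t < k - 1 := by simpa using ht
  have hlen : (w.take (k + i)).length = k + i := by simp [h]
  rw [testBit_binVal _ _ (by omega), hlen]
  simp [List.getD, show k + i - 1 - t < k + i by omega]

/-- Long words occur at most once among the factors `v i`. -/
theorem occurrence_factorWord_unique {B : List Bool} {c k : ℕ} (hk : k ≤ B.length)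
    (hB : ∀ x : List Bool, x.length = c → countOcc x B ≤ 1) {x : List (RSym (Fin 2))}
    (hx : x.length = 2 * c + 2) {i j p q : ℕ} (hi : i ≤ k) (hj : j ≤ k)
    (hp : ((factorWord (hmap (B.take k)) k i).drop p).take x.length = x)
    (hq : ((factorWord (hmap (B.take k)) k j).drop q).take x.length = x) : i = j ∧ p = q := by
  set w := hmap (B.take k)
  have hij : i = j := by
    have hp' := hp
    have hq' := hq
    rw [factorWord_eq, ← List.map_drop, ← List.map_take] at hp' hq'
    have hy := List.map_injective_iff.2 powSym_injective (hp'.trans hq'.symm)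
    have hlen := congrArg List.length hp'
    rw [List.length_map] at hlen
    obtain ⟨s, hs, hagree⟩ := exists_agree_of_common_factor (m := 2 * c + 1)
      (isInfix_take_drop _ _ _) (hy.symm ▸ isInfix_take_drop _ _ _) (hlen.trans hx)
    have := hmap_window_unique (p := k + i - 1 - (s + (2 * c + 1)))
      (q := k + j - 1 - (s + (2 * c + 1))) hk hB (by omega) (by omega) (by
        intro u hu
        have := hagree (2 * c + 1 - u) (by omega)
        convert this using 2 <;> omega)
    omega
  subst hij
  refine ⟨rfl, ?_⟩
  have hlen : ∀ n, ((factorWord w k i).drop n).take x.length = x →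
      n < (factorWord w k i).length ∧ (factorWord w k i)[n]? = x[0]? := by
    intro n hn
    refine ⟨?_, ?_⟩
    · have := congrArg List.length hn
      rw [List.length_take, List.length_drop] at this
      omega
    · rw [← hn, List.getElem?_take, List.getElem?_drop]
      simp [hx]
  obtain ⟨hp1, hp2⟩ := hlen p hp
  obtain ⟨hq1, hq2⟩ := hlen q hq
  have h := hp2.trans hq2.symm
  rw [List.getElem?_eq_getElem hp1, List.getElem?_eq_getElem hq1, Option.some_inj] at h
  exact (nodup_factorWord w k i).getElem_inj_iff.1 h

end BinaryPrefixes

/-- For `s_k` built from `w = h(B[1:k])` (`B` a De Bruijn sequence of order `⌈log₂ k⌉`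
starting with `1`), the start rule after `k - 1` rounds of RePair contains `k` pairwise
non-overlapping factors `v i = f (k-2) (w[i+2]) ⋯ f 1 (w[k+i-1]) f 0 (w[k+i])`
(with `f 0 1 = a`, `f j 1 = X j`, `f j 0 = ε`); each `v i` has length `≥ (k-3)/2`, no
letter occurs twice in any `v i`, and every word of length `2⌈log₂ k⌉ + 2` occurs at
most once among the factors of the `v i`. -/
theorem repair_stmt_19 (k : ℕ) (hk : 4 ≤ k) (B : List Bool)
    (hBlen : B.length = 2 ^ Nat.clog 2 k) (hBhead : B.headI = true)
    (hB : ∀ x : List Bool, x.length = Nat.clog 2 k → countOcc x B ≤ 1) :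
    (∀ i, 1 ≤ i → i ≤ k →
      ((List.range (k - 1)).flatMap (fun j =>
        if (hmap (B.take k)).getD (i + 1 + j) false then
          [if k - 2 - j = 0 then (Sum.inr 0 : RSym (Fin 2)) else Sum.inl (k - 2 - j)]
        else [])).Nodup ∧
      k - 3 ≤ 2 * ((List.range (k - 1)).flatMap (fun j =>
        if (hmap (B.take k)).getD (i + 1 + j) false then
          [if k - 2 - j = 0 then (Sum.inr 0 : RSym (Fin 2)) else Sum.inl (k - 2 - j)]
        else [])).length) ∧
    (∀ x : List (RSym (Fin 2)), x.length = 2 * Nat.clog 2 k + 2 →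
      (∑ i ∈ Finset.Icc 1 k, countOcc x ((List.range (k - 1)).flatMap (fun j =>
        if (hmap (B.take k)).getD (i + 1 + j) false then
          [if k - 2 - j = 0 then (Sum.inr 0 : RSym (Fin 2)) else Sum.inl (k - 2 - j)]
        else []))) ≤ 1) ∧
    (∀ G : Grammar (Fin 2),
      RePairSteps (k - 1)
        (RePairInit (blockWord (fun i => binVal ((hmap (B.take k)).take (k + i))) k)) G →
      ∃ pos : ℕ → ℕ,
        (∀ i, 1 ≤ i → i ≤ k →
          (G.headI.drop (pos i)).take ((List.range (k - 1)).flatMap (fun j =>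
            if (hmap (B.take k)).getD (i + 1 + j) false then
              [if k - 2 - j = 0 then (Sum.inr 0 : RSym (Fin 2)) else Sum.inl (k - 2 - j)]
            else [])).length =
          (List.range (k - 1)).flatMap (fun j =>
            if (hmap (B.take k)).getD (i + 1 + j) false then
              [if k - 2 - j = 0 then (Sum.inr 0 : RSym (Fin 2)) else Sum.inl (k - 2 - j)]
            else [])) ∧
        (∀ i j, 1 ≤ i → i < j → j ≤ k →
          pos i + ((List.range (k - 1)).flatMap (fun j' =>
            if (hmap (B.take k)).getD (i + 1 + j') false then
              [if k - 2 - j' = 0 then (Sum.inr 0 : RSym (Fin 2)) else Sum.inl (k - 2 - j')]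
            else [])).length ≤ pos j)) := by
  have hkB : k ≤ B.length := hBlen ▸ Nat.le_pow_clog (by norm_num) k
  have htake : (B.take k).length = k := by simp [hkB]
  have hwlen : (hmap (B.take k)).length = 2 * k := by rw [length_hmap, htake]
  refine ⟨fun i hi hik => ⟨nodup_factorWord (hmap (B.take k)) k i, ?_⟩, fun x hx => ?_,
    fun G hG => ?_⟩
  · change k - 3 ≤ 2 * (factorWord (hmap (B.take k)) k i).length
    rw [factorWord_eq_map_filter, List.length_map]
    have := le_two_mul_length_filter (fun n => (hmap (B.take k)).getD n false) k
      (fun t ht => by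
        obtain ⟨h0, h1⟩ := getD_hmap (B.take k) t (by omega)
        simp only [h0, h1]) (k - 1) (i + 1) (by omega)
    omega
  · apply sum_countOcc_le_one (v := fun i => factorWord (hmap (B.take k)) k i)
    intro i hi j hj p q hp hq
    exact occurrence_factorWord_unique hkB hB hx (Finset.mem_Icc.1 hi).2
      (Finset.mem_Icc.1 hj).2 hp hq
  · obtain ⟨l, rfl⟩ : ∃ l, k = l + 1 := ⟨k - 1, by omega⟩
    set w := hmap (B.take (l + 1)) with hw
    have hhead : w.headI = true := by
      rw [hw]
      cases B with
      | nil => simp at hBhead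
      | cons b B =>
        obtain rfl : b = true := by simpa using hBhead
        simp [hmap]
    set M : ℕ → ℕ := fun i => binVal (w.take (l + 1 + (i + 1))) with hM
    have hMbig : ∀ i ≤ l, 2 ^ (l + 1) ≤ M i := by
      intro i hi
      have hlen : (w.take (l + 1 + (i + 1))).length = l + 1 + (i + 1) := by
        rw [List.length_take]
        omega
      have h1 := two_pow_le_binVal (w.take (l + 1 + (i + 1))) (by
        cases hcase : w with
        | nil => simp [hcase] at hwlen
        | cons b u => simpa [hcase, List.take_succ_cons, ← add_assoc] using hhead)
      rw [hlen, show l + 1 + (i + 1) = (l + 1 + i) + 1 by ring, pow_succ] at h1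
      have h2 : 2 ^ (l + 1) ≤ 2 ^ (l + 1 + i) := Nat.pow_le_pow_right (by norm_num) (by omega)
      change 2 ^ (l + 1) ≤ binVal (w.take (l + 1 + i + 1))
      omega
    rw [repairInit_blockWord] at hG
    obtain rfl := eq_roundGrammar_of_steps (by omega) hMbig hG
    obtain ⟨pos, h1, h2⟩ := exists_positions_startRule l M l
    have hfac : ∀ i, 1 ≤ i → i ≤ l + 1 → factorWord w (l + 1) i = lowWord l (M (i - 1)) := by
      intro i hi hil
      rw [factorWord_eq_lowWord w (l + 1) i (by omega), hM]
      simp only [Nat.add_sub_cancel, Nat.sub_add_cancel hi]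
    refine ⟨fun i => pos (i - 1), fun i hi hil => ?_, fun i j hi hij hj => ?_⟩
    · change ((startRule l M l).drop (pos (i - 1))).take (factorWord w (l + 1) i).length =
        factorWord w (l + 1) i
      rw [hfac i hi hil]
      exact h1 (i - 1) (by omega)
    · change pos (i - 1) + (factorWord w (l + 1) i).length ≤ pos (j - 1)
      rw [hfac i hi (by omega)]
      exact h2 (i - 1) (j - 1) (by omega) (by omega)
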